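/- arXiv:2103.08361 — 2 statements merged into one kernel-verified Lean document; each statement's English description precedes it below -/
import Mathlib

section
/- Let V be a finite set and let p : V → ℝ satisfy 0 ≤ p(v) ≤ p̂ for every v ∈ V, where p̂ is a real number with 0 ≤ p̂ < 1. Set P = Σ_{v∈V} p(v). Then Σ_{v∈V} p(v) · ∏_{w∈V, w≠v} (1 − p(w)) ≥ P · exp(−P/(1 − p̂)). -/
open Finset Real

/-!
Including the factor `1 - p v ≤ 1` in the `v`-th product only decreases it, so the sum is at least
`P * ∏ w ∈ V, (1 - p w)`, where `P = ∑ v ∈ V, p v`. The inequality `1 - y⁻¹ ≤ log y` at `y = 1 - x`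
gives `exp (-x / (1 - x)) ≤ 1 - x`; replacing the denominator by its lower bound `1 - phat` makes it
the same for all factors, and the exponents add up to `-P / (1 - phat)`.
-/

theorem exp_neg_div_one_sub_self_le_one_sub {x : ℝ} (hx : x < 1) : exp (-x / (1 - x)) ≤ 1 - x := by
  have hpos : 0 < 1 - x := sub_pos.mpr hx
  rw [← le_log_iff_exp_le hpos]
  calc -x / (1 - x) = 1 - (1 - x)⁻¹ := by field_simp; ring
    _ ≤ log (1 - x) := one_sub_inv_le_log_of_pos hpos

theorem exp_neg_div_one_sub_le_one_sub {x c : ℝ} (hx : 0 ≤ x) (hxc : x ≤ c) (hc : c < 1) :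
    exp (-x / (1 - c)) ≤ 1 - x := by
  have : 0 < 1 - c := sub_pos.mpr hc
  calc exp (-x / (1 - c)) ≤ exp (-x / (1 - x)) := by
        rw [neg_div, neg_div]
        gcongr
    _ ≤ 1 - x := exp_neg_div_one_sub_self_le_one_sub (hxc.trans_lt hc)

theorem exp_neg_sum_div_one_sub_le_prod_one_sub {ι : Type*} {s : Finset ι} {p : ι → ℝ} {c : ℝ}
    (hp : ∀ i ∈ s, 0 ≤ p i) (hpc : ∀ i ∈ s, p i ≤ c) (hc : c < 1) :
    exp (-(∑ i ∈ s, p i) / (1 - c)) ≤ ∏ i ∈ s, (1 - p i) :=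
  calc exp (-(∑ i ∈ s, p i) / (1 - c)) = ∏ i ∈ s, exp (-p i / (1 - c)) := by
        rw [← sum_neg_distrib, sum_div, exp_sum]
    _ ≤ ∏ i ∈ s, (1 - p i) :=
        prod_le_prod (fun _ _ ↦ (exp_pos _).le)
          fun i hi ↦ exp_neg_div_one_sub_le_one_sub (hp i hi) (hpc i hi) hc

theorem sum_mul_prod_le_sum_mul_prod_erase {ι R : Type*} [DecidableEq ι] [CommSemiring R]
    [PartialOrder R] [IsOrderedRing R] {s : Finset ι} {f g : ι → R}
    (hf : ∀ i ∈ s, 0 ≤ f i) (hg₀ : ∀ i ∈ s, 0 ≤ g i) (hg₁ : ∀ i ∈ s, g i ≤ 1) :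
    (∑ i ∈ s, f i) * ∏ j ∈ s, g j ≤ ∑ i ∈ s, f i * ∏ j ∈ s.erase i, g j := by
  rw [sum_mul]
  refine sum_le_sum fun i hi ↦ mul_le_mul_of_nonneg_left ?_ (hf i hi)
  exact prod_le_prod_of_subset_of_le_one (erase_subset i s) hg₀ fun j hj _ ↦ hg₁ j hj

theorem stmt_0 {α : Type*} [DecidableEq α] (V : Finset α) (p : α → ℝ) (phat : ℝ)
    (hphat0 : 0 ≤ phat) (hphat1 : phat < 1)
    (hp0 : ∀ v ∈ V, 0 ≤ p v) (hp1 : ∀ v ∈ V, p v ≤ phat) :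
    (∑ v ∈ V, p v) * Real.exp (-(∑ v ∈ V, p v) / (1 - phat)) ≤
      ∑ v ∈ V, p v * ∏ w ∈ V.erase v, (1 - p w) :=
  calc (∑ v ∈ V, p v) * Real.exp (-(∑ v ∈ V, p v) / (1 - phat))
      ≤ (∑ v ∈ V, p v) * ∏ w ∈ V, (1 - p w) :=
        mul_le_mul_of_nonneg_left (exp_neg_sum_div_one_sub_le_prod_one_sub hp0 hp1 hphat1)
          (sum_nonneg hp0)
    _ ≤ ∑ v ∈ V, p v * ∏ w ∈ V.erase v, (1 - p w) :=
        sum_mul_prod_le_sum_mul_prod_erase hp0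
          (fun w hw ↦ sub_nonneg.mpr ((hp1 w hw).trans hphat1.le))
          (fun w hw ↦ sub_le_self 1 (hp0 w hw))
end

section
/- For every real γ with 0 < γ ≤ 1/2 and all reals q₀, q₁ ≥ 0 satisfying q₁ ≥ 5·q₀, one has q₀·(1+γ) + q₁·(1+γ)^{−1} ≤ (q₀ + q₁)·(1+γ)^{−1/2}. -/
/-!
With `s = √(1 + γ)`, the right side minus the left side factors as
`(s - 1) * (q₁ - q₀ * (s + s ^ 2 + s ^ 3)) / s ^ 2`, so for `γ > 0` the inequality says exactly that
`q₁` is at least `s + s ^ 2 + s ^ 3` times `q₀`. The bound `γ ≤ 1/2` keeps that ratio below `5`.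
-/

theorem add_mul_inv_sub_mul_sq_add_mul_inv_sq {K : Type*} [Field K] {s : K} (hs : s ≠ 0)
    (a b : K) :
    (a + b) * s⁻¹ - (a * s ^ 2 + b * (s ^ 2)⁻¹) =
      (s - 1) * (b - a * (s + s ^ 2 + s ^ 3)) / s ^ 2 := by
  field_simp
  ring

section LinearOrderedField

variable {K : Type*} [Field K] [LinearOrder K] [IsStrictOrderedRing K] {s : K}

theorem mul_sq_add_mul_inv_sq_le_add_mul_inv_iff (hs : 1 < s) (a b : K) :
    a * s ^ 2 + b * (s ^ 2)⁻¹ ≤ (a + b) * s⁻¹ ↔ a * (s + s ^ 2 + s ^ 3) ≤ b := by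
  have hs_pos : 0 < s := zero_lt_one.trans hs
  rw [← sub_nonneg, add_mul_inv_sub_mul_sq_add_mul_inv_sq hs_pos.ne',
    le_div_iff₀ (pow_pos hs_pos 2), zero_mul, mul_nonneg_iff_of_pos_left (sub_pos.2 hs), sub_nonneg]

theorem add_sq_add_cube_le_five_of_sq_le (hs : s ^ 2 ≤ 3 / 2) : s + s ^ 2 + s ^ 3 ≤ 5 := by
  have hs_le : s ≤ 5 / 4 := le_of_sq_le_sq (hs.trans (by norm_num)) (by norm_num)
  calc s + s ^ 2 + s ^ 3 = s * (1 + s ^ 2) + s ^ 2 := by ring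
    _ ≤ 5 / 4 * (1 + s ^ 2) + s ^ 2 := by gcongr
    _ ≤ 5 / 4 * (1 + 3 / 2) + 3 / 2 := by gcongr
    _ ≤ 5 := by norm_num

end LinearOrderedField

theorem stmt_4 (γ q₀ q₁ : ℝ) (hγ0 : 0 < γ) (hγ : γ ≤ 1/2)
    (hq₀ : 0 ≤ q₀) (hq₁ : 0 ≤ q₁) (h : 5 * q₀ ≤ q₁) :
    q₀ * (1 + γ) + q₁ * (1 + γ)⁻¹ ≤ (q₀ + q₁) * (1 + γ) ^ (-(1:ℝ)/2) := by
  have hnonneg : 0 ≤ 1 + γ := by linarith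
  obtain ⟨s, hs, hs_sq, hs_inv⟩ :
      ∃ s : ℝ, 1 < s ∧ s ^ 2 = 1 + γ ∧ (1 + γ) ^ (-(1:ℝ)/2) = s⁻¹ :=
    ⟨√(1 + γ), Real.lt_sqrt_of_sq_lt (by linarith), Real.sq_sqrt hnonneg,
      by rw [Real.rpow_div_two_eq_sqrt _ hnonneg, Real.rpow_neg_one]⟩
  have hs_sq_le : s ^ 2 ≤ 3 / 2 := by linarith
  rw [hs_inv, ← hs_sq, mul_sq_add_mul_inv_sq_le_add_mul_inv_iff hs]
  calc q₀ * (s + s ^ 2 + s ^ 3) ≤ q₀ * 5 := by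
        gcongr
        exact add_sq_add_cube_le_five_of_sq_le hs_sq_le
    _ = 5 * q₀ := mul_comm _ _
    _ ≤ q₁ := h
end
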